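/- The matrix K(λ; ς, κ, τ) = (1/sinh ς)·[[sinh(λ−η/2+ς), κ e^{τ} sinh(2λ−η)],[κ e^{−τ} sinh(2λ−η), sinh(ς−λ+η/2)]] satisfies the reflection equation R_{21}(λ−μ) K_1(λ) R_{12}(λ+μ−η) K_2(μ) = K_2(μ) R_{21}(λ+μ−η) K_1(λ) R_{12}(λ−μ) as an identity of 4×4 complex matrices, where R is the 6-vertex R-matrix [[sinh(λ+η),0,0,0],[0,sinh λ,sinh η,0],[0,sinh η,sinh λ,0],[0,0,0,sinh(λ+η)]] (which satisfies R_{21} = R_{12}), for all complex λ, μ, η, ς, κ, τ with sinh ς ≠ 0. -/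

import Mathlib

/-!
Put `x = λ - η/2`, `y = μ - η/2`, so that the two spectral parameters are `λ - μ = x - y` and
`λ + μ - η = x + y`, while the entries of `sinh ς • K(λ)` are `sinh (ς ± x)` on the diagonal and
`κ e^{±τ} sinh (2x)` off it. In every matrix entry, products of two off-diagonal entries of the
boundary matrices cancel and a single off-diagonal entry contributes the common prefactor `κ e^{τ}`
or `κ e^{-τ}`. The scalar equations that remain are `diag_exchange` (both boundary matrices
contribute diagonal entries) and `offdiag_snd`, `offdiag_fst` (exactly one contributes an
off-diagonal entry), the last two taken at `ς` and at `-ς`, since `ς ↦ -ς` exchanges the diagonal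
entries of `sinh ς • K` up to sign. Each of these follows from the three-term relation
`sinh_three_term`, the hyperbolic form of Ptolemy's theorem.
-/

open Complex

/-- The 6-vertex trigonometric R-matrix on `ℂ² ⊗ ℂ²`. -/
noncomputable def R6v (η l : ℂ) : Matrix (Fin 2 × Fin 2) (Fin 2 × Fin 2) ℂ :=
  Matrix.of fun p q =>
    if p = q then (if p.1 = p.2 then Complex.sinh (l + η) else Complex.sinh l)
    else if p.1 = q.2 ∧ p.2 = q.1 then Complex.sinh η
    else 0

/-- `R₂₁(λ) = P R₁₂(λ) P`, with `P` the permutation of the two factors. -/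
noncomputable def R6v21 (η l : ℂ) : Matrix (Fin 2 × Fin 2) (Fin 2 × Fin 2) ℂ :=
  Matrix.of fun p q => R6v η l (p.2, p.1) (q.2, q.1)

/-- The general scalar boundary matrix `K(λ; ς, κ, τ)`. -/
noncomputable def Kmat (η s κ τ l : ℂ) : Matrix (Fin 2) (Fin 2) ℂ :=
  !![Complex.sinh (l - η / 2 + s) / Complex.sinh s,
     κ * Complex.exp τ * Complex.sinh (2 * l - η) / Complex.sinh s;
     κ * Complex.exp (-τ) * Complex.sinh (2 * l - η) / Complex.sinh s,
     Complex.sinh (s - l + η / 2) / Complex.sinh s]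

/-- `K₁(λ) = K(λ) ⊗ id`. -/
noncomputable def K1 (η s κ τ l : ℂ) : Matrix (Fin 2 × Fin 2) (Fin 2 × Fin 2) ℂ :=
  Matrix.of fun p q => if p.2 = q.2 then Kmat η s κ τ l p.1 q.1 else 0

/-- `K₂(μ) = id ⊗ K(μ)`. -/
noncomputable def K2 (η s κ τ l : ℂ) : Matrix (Fin 2 × Fin 2) (Fin 2 × Fin 2) ℂ :=
  Matrix.of fun p q => if p.1 = q.1 then Kmat η s κ τ l p.2 q.2 else 0

/-- Hyperbolic Ptolemy identity. -/
theorem sinh_three_term (p q r : ℂ) :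
    sinh (p + q) * sinh (q + r) = sinh p * sinh r + sinh q * sinh (p + q + r) := by
  simp only [sinh_add, cosh_add]
  linear_combination (sinh p * sinh r) * cosh_sq_sub_sinh_sq q

/-- The terms diagonal in both boundary matrices, in the entries `(01, 10)` and `(10, 01)`. -/
theorem diag_exchange (s x y : ℂ) :
    sinh (x - y) * (sinh (x + s) * sinh (y + s) - sinh (s - x) * sinh (s - y)) +
      sinh (x + y) * (sinh (s - x) * sinh (y + s) - sinh (x + s) * sinh (s - y)) = 0 := by
  have h₁ : sinh (x + s) * sinh (y + s) =
      sinh (s - y) * sinh (s - x) + sinh (x + y) * sinh (2 * s) := by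
    convert sinh_three_term (s - y) (x + y) (s - x) using 3 <;> ring_nf
  have h₂ : sinh (x + s) * sinh (s - y) =
      sinh (y + s) * sinh (s - x) + sinh (x - y) * sinh (2 * s) := by
    convert sinh_three_term (y + s) (x - y) (s - x) using 3 <;> ring_nf
  linear_combination sinh (x - y) * h₁ - sinh (x + y) * h₂

/-- The scalar equation for the matrix entries whose row and column differ in the second tensor
factor only, the first factor being in the state `0`, with the prefactor `κ e^{±τ}` removed. The state
`1` corresponds to replacing `s` by `-s`. -/
theorem offdiag_snd (η s x y : ℂ) :
    sinh (x + s) * (sinh (x - y + η) * sinh (x + y + η) - sinh (x - y) * sinh (x + y)) *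
        sinh (2 * y) +
      sinh (2 * x) * sinh η *
        (sinh (x - y + η) * sinh (s - y) - sinh (x + y + η) * sinh (y + s)) -
      sinh η ^ 2 * sinh (s - x) * sinh (2 * y) = 0 := by
  have h₁ : sinh (x - y + η) * sinh (x + y + η) =
      sinh (x - y) * sinh (x + y) + sinh η * sinh (2 * x + η) := by
    convert sinh_three_term (x - y) η (x + y) using 3 <;> ring_nf
  have h₂ : sinh (x + y + η) * sinh (y + s) =
      sinh (x - y + η) * sinh (s - y) + sinh (2 * y) * sinh (x + η + s) := by
    convert sinh_three_term (x - y + η) (2 * y) (s - y) using 3 <;> ring_nf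
  have h₃ : sinh (2 * x + η) * sinh (x + s) =
      sinh η * sinh (s - x) + sinh (2 * x) * sinh (x + η + s) := by
    convert sinh_three_term η (2 * x) (s - x) using 3 <;> ring_nf
  linear_combination sinh (x + s) * sinh (2 * y) * h₁ - sinh (2 * x) * sinh η * h₂ +
    sinh η * sinh (2 * y) * h₃

/-- The scalar equation for the matrix entries whose row and column differ in the first tensor
factor only, the second factor being in the state `0`, with the prefactor `κ e^{±τ}` removed. The state
`1` corresponds to replacing `s` by `-s`. -/
theorem offdiag_fst (η s x y : ℂ) :
    sinh (2 * x) * (sinh (x - y + η) * sinh (x + y) - sinh (x - y) * sinh (x + y + η)) *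
        sinh (y + s) -
      sinh η * sinh (2 * y) * (sinh (x + s) * sinh (x + y) + sinh (s - x) * sinh (x - y)) = 0 := by
  have h₁ : sinh (x - y + η) * sinh (x + y) =
      sinh η * sinh (2 * y) + sinh (x - y) * sinh (x + y + η) := by
    convert sinh_three_term η (x - y) (2 * y) using 3 <;> ring_nf
  have h₂ : sinh (2 * x) * sinh (y + s) =
      sinh (x - y) * sinh (s - x) + sinh (x + y) * sinh (x + s) := by
    convert sinh_three_term (x - y) (x + y) (s - x) using 3 <;> ring_nf
  linear_combination sinh (2 * x) * sinh (y + s) * h₁ + sinh η * sinh (2 * y) * h₂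

/-- The reflection equation for the general boundary matrix `K(λ; ς, κ, τ)`:
`R₂₁(λ−μ) K₁(λ) R₁₂(λ+μ−η) K₂(μ) = K₂(μ) R₂₁(λ+μ−η) K₁(λ) R₁₂(λ−μ)`. -/
theorem reflection_equation (η s κ τ lam mu : ℂ) (hs : Complex.sinh s ≠ 0) :
    R6v21 η (lam - mu) * K1 η s κ τ lam * R6v η (lam + mu - η) * K2 η s κ τ mu =
      K2 η s κ τ mu * R6v21 η (lam + mu - η) * K1 η s κ τ lam * R6v η (lam - mu) := by
  obtain ⟨x, rfl⟩ : ∃ x, lam = x + η / 2 := ⟨lam - η / 2, by ring⟩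
  obtain ⟨y, rfl⟩ : ∃ y, mu = y + η / 2 := ⟨mu - η / 2, by ring⟩
  have h_diag := diag_exchange s x y
  have h_snd := offdiag_snd η s x y
  have h_fst := offdiag_fst η s x y
  -- `s ↦ -s` exchanges the two diagonal entries of `K`, up to sign.
  have h_snd' := offdiag_snd η (-s) x y
  have h_fst' := offdiag_fst η (-s) x y
  have hneg (z : ℂ) : sinh (-s - z) = -sinh (z + s) := by rw [← sinh_neg]; ring_nf
  have hadd (z : ℂ) : sinh (z + -s) = -sinh (s - z) := by rw [← sinh_neg]; ring_nf
  simp only [hneg, hadd] at h_snd' h_fst'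
  have e₁ : x + η / 2 - (y + η / 2) = x - y := by ring
  have e₂ : x + η / 2 + (y + η / 2) - η = x + y := by ring
  have e₃ (z : ℂ) : z + η / 2 - η / 2 + s = z + s := by ring
  have e₄ (z : ℂ) : 2 * (z + η / 2) - η = 2 * z := by ring
  have e₅ (z : ℂ) : s - (z + η / 2) + η / 2 = s - z := by ring
  ext ⟨i, j⟩ ⟨k, l⟩
  simp only [Matrix.mul_apply, Fintype.sum_prod_type, Fin.sum_univ_two, R6v21, R6v, K1, K2, Kmat,
    Matrix.of_apply, e₁, e₂, e₃, e₄, e₅]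
  generalize sinh (x - y + η) = a at *
  generalize sinh (x - y) = b at *
  generalize sinh (x + y + η) = e at *
  generalize sinh (x + y) = f at *
  generalize sinh η = c at *
  generalize sinh (x + s) = A at *
  generalize sinh (s - x) = D at *
  generalize sinh (y + s) = p at *
  generalize sinh (s - y) = t at *
  generalize sinh (2 * x) = X at *
  generalize sinh (2 * y) = Y at *
  generalize κ * exp τ = β at *
  generalize κ * exp (-τ) = γ at *
  generalize sinh s = σ at *
  fin_cases i <;> fin_cases j <;> fin_cases k <;> fin_cases l <;> simp
  · ring
  · linear_combination β / σ ^ 2 * h_snd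
  · linear_combination β / σ ^ 2 * h_fst
  · ring
  · linear_combination -γ / σ ^ 2 * h_snd
  · ring
  · linear_combination c / σ ^ 2 * h_diag
  · linear_combination β / σ ^ 2 * h_fst'
  · linear_combination -γ / σ ^ 2 * h_fst
  · linear_combination -c / σ ^ 2 * h_diag
  · ring
  · linear_combination β / σ ^ 2 * h_snd'
  · ring
  · linear_combination -γ / σ ^ 2 * h_fst'
  · linear_combination -γ / σ ^ 2 * h_snd'
  · ring
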